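/- For any set S of pairwise disjoint sub-problems of the capacitated single-item lot-sizing problem, the sum over i in S of a lower bound w_i on the optimal cost of sub-problem i is a lower bound on the optimal cost C of the full problem. -/

import Mathlib

/-- Feasibility of a production plan `(X, I)` for the capacitated single-item
lot-sizing problem over periods `1..T` with demands `d`, production capacities
`ahi` and inventory capacities `bhi` (no lower bounds), `I 0 = I T = 0`. -/
def Feasible (T : ℕ) (d ahi bhi : ℕ → ℕ) (X I : ℕ → ℕ) : Prop :=
  I 0 = 0 ∧ I T = 0 ∧
  ∀ t ∈ Finset.Icc 1 T, I (t - 1) + X t = d t + I t ∧ X t ≤ ahi t ∧ I t ≤ bhi t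

/-- Total cost `Σ (p_t X_t + h_t I_t + s_t·[X_t > 0])`. -/
def planCost (T : ℕ) (p h s : ℕ → ℕ) (X I : ℕ → ℕ) : ℕ :=
  ∑ t ∈ Finset.Icc 1 T, (p t * X t + h t * I t + if 0 < X t then s t else 0)

/-- Demands of sub-problem `(L_{u,v})`: zero outside `[u, v]`. -/
def subd (u v : ℕ) (d : ℕ → ℕ) : ℕ → ℕ := fun t => if t ∈ Finset.Icc u v then d t else 0

/-- Setup costs of sub-problem `(L_{u,v})`: zero outside `[u, v]`. -/
def subs (u v : ℕ) (s : ℕ → ℕ) : ℕ → ℕ := fun t => if t ∈ Finset.Icc u v then s t else 0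

/-!
The optimal cost is superadditive in the pair (demands, setup costs). A plan for `d₁ + d₂` splits
into a plan for `d₁` and a plan for `d₂` by working backwards from the last period: what the first
plan needs in period `t`, namely `d₁ t` plus its ending stock, is drawn from the stock of the given
plan as far as this suffices, and only the rest is produced. The parts inherit the bounds, and a
part produces only in periods in which the whole does, so the setup costs of the parts in a period
add up to at most the setup cost of the whole. Disjoint intervals cut out demands and setup costs
that add up to at most `d` and `s`.
-/

/-- The ending stock in period `t` of the plan for the partial demand `d₁` carved out of a plan
over `1..T` with stock `I`: as much as possible of what is needed later comes from stock. -/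
def partialStock (T : ℕ) (d₁ I : ℕ → ℕ) (t : ℕ) : ℕ :=
  if t < T then min (I t) (d₁ (t + 1) + partialStock T d₁ I (t + 1)) else 0
termination_by T - t

/-- The production in period `t` of the plan with ending stock `partialStock T d₁ I`. The
subtraction does not truncate for `1 ≤ t ≤ T`. -/
def partialProduction (T : ℕ) (d₁ I : ℕ → ℕ) (t : ℕ) : ℕ :=
  d₁ t + partialStock T d₁ I t - partialStock T d₁ I (t - 1)

section Splitting

variable {T t : ℕ} {d₁ d₂ ahi bhi X I X₁ I₁ : ℕ → ℕ}

theorem partialStock_le : partialStock T d₁ I t ≤ I t := by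
  rw [partialStock]
  split_ifs
  · exact min_le_left _ _
  · exact Nat.zero_le _

theorem partialStock_self : partialStock T d₁ I T = 0 := by
  rw [partialStock, if_neg (lt_irrefl T)]

theorem partialStock_pred (ht : t ∈ Finset.Icc 1 T) :
    partialStock T d₁ I (t - 1) = min (I (t - 1)) (d₁ t + partialStock T d₁ I t) := by
  obtain ⟨h1t, htT⟩ := Finset.mem_Icc.1 ht
  rw [partialStock, if_pos (by omega), Nat.sub_add_cancel h1t]

theorem partialStock_pred_add_partialProduction (ht : t ∈ Finset.Icc 1 T) :
    partialStock T d₁ I (t - 1) + partialProduction T d₁ I t = d₁ t + partialStock T d₁ I t :=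
  Nat.add_sub_cancel' ((partialStock_pred ht).trans_le (min_le_right _ _))

theorem Feasible.partialProduction_le (hXI : Feasible T (d₁ + d₂) ahi bhi X I)
    (ht : t ∈ Finset.Icc 1 T) : partialProduction T d₁ I t ≤ X t := by
  have hflow : I (t - 1) + X t = d₁ t + d₂ t + I t := (hXI.2.2 t ht).1
  have hle : partialStock T d₁ I t ≤ I t := partialStock_le
  rw [partialProduction, partialStock_pred ht]
  omega

theorem Feasible.partial (hXI : Feasible T (d₁ + d₂) ahi bhi X I) :
    Feasible T d₁ ahi bhi (partialProduction T d₁ I) (partialStock T d₁ I) :=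
  ⟨Nat.le_zero.1 (partialStock_le.trans_eq hXI.1), partialStock_self, fun t ht =>
    ⟨partialStock_pred_add_partialProduction ht,
      (hXI.partialProduction_le ht).trans (hXI.2.2 t ht).2.1,
      partialStock_le.trans (hXI.2.2 t ht).2.2⟩⟩

theorem Feasible.sub (hXI : Feasible T (d₁ + d₂) ahi bhi X I)
    (hflow₁ : ∀ t ∈ Finset.Icc 1 T, I₁ (t - 1) + X₁ t = d₁ t + I₁ t)
    (hX : ∀ t ∈ Finset.Icc 1 T, X₁ t ≤ X t) (hI : I₁ ≤ I) :
    Feasible T d₂ ahi bhi (X - X₁) (I - I₁) := by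
  obtain ⟨hI0, hIT, hflow⟩ := hXI
  refine ⟨by simp [hI0], by simp [hIT], fun t ht => ?_⟩
  obtain ⟨hbal, hXa, hIb⟩ := hflow t ht
  have hbal₁ := hflow₁ t ht
  have hXt := hX t ht
  have hIt : I₁ t ≤ I t := hI t
  have hIpred : I₁ (t - 1) ≤ I (t - 1) := hI (t - 1)
  simp only [Pi.sub_apply, Pi.add_apply] at hbal ⊢
  omega

theorem Feasible.exists_split (hXI : Feasible T (d₁ + d₂) ahi bhi X I) :
    ∃ X₁ I₁ X₂ I₂ : ℕ → ℕ, Feasible T d₁ ahi bhi X₁ I₁ ∧ Feasible T d₂ ahi bhi X₂ I₂ ∧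
      ∀ t ∈ Finset.Icc 1 T, X₁ t + X₂ t = X t ∧ I₁ t + I₂ t = I t :=
  ⟨partialProduction T d₁ I, partialStock T d₁ I, X - partialProduction T d₁ I,
    I - partialStock T d₁ I, hXI.partial,
    hXI.sub (fun _ => partialStock_pred_add_partialProduction)
      (fun _ => hXI.partialProduction_le) fun _ => partialStock_le,
    fun _ ht => ⟨Nat.add_sub_cancel' (hXI.partialProduction_le ht),
      Nat.add_sub_cancel' partialStock_le⟩⟩

end Splitting

theorem planCost_add_planCost_le {T : ℕ} {p h s s₁ s₂ X I X₁ I₁ X₂ I₂ : ℕ → ℕ}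
    (hs : s₁ + s₂ ≤ s)
    (hX : ∀ t ∈ Finset.Icc 1 T, X₁ t + X₂ t ≤ X t)
    (hI : ∀ t ∈ Finset.Icc 1 T, I₁ t + I₂ t ≤ I t) :
    planCost T p h s₁ X₁ I₁ + planCost T p h s₂ X₂ I₂ ≤ planCost T p h s X I := by
  unfold planCost
  rw [← Finset.sum_add_distrib]
  refine Finset.sum_le_sum fun t ht => ?_
  have hXt := hX t ht
  have hproduction : p t * (X₁ t + X₂ t) ≤ p t * X t := Nat.mul_le_mul_left _ hXt
  have hholding : h t * (I₁ t + I₂ t) ≤ h t * I t := Nat.mul_le_mul_left _ (hI t ht)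
  have hsetup : (if 0 < X₁ t then s₁ t else 0) + (if 0 < X₂ t then s₂ t else 0) ≤
      if 0 < X t then s t else 0 := by
    have hst : s₁ t + s₂ t ≤ s t := hs t
    split_ifs <;> omega
  linarith

theorem sum_indicator_le_self {ι α M : Type*} [AddCommMonoid M] [Preorder M]
    {S : Finset ι} {A : ι → Set α} (hA : (S : Set ι).PairwiseDisjoint A) {f : α → M}
    (hf : 0 ≤ f) : ∑ i ∈ S, (A i).indicator f ≤ f := by
  intro a
  rw [Finset.sum_apply, ← Finset.indicator_biUnion_apply S A hA]
  exact Set.indicator_le_self' (fun x _ => hf x) a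

theorem sum_subd_le {ι : Type*} {S : Finset ι} {u v : ι → ℕ}
    (huv : (S : Set ι).PairwiseDisjoint fun i => Finset.Icc (u i) (v i)) (d : ℕ → ℕ) :
    ∑ i ∈ S, subd (u i) (v i) d ≤ d := by
  have hsubd (i : ι) : subd (u i) (v i) d = (Finset.Icc (u i) (v i) : Set ℕ).indicator d := by
    ext t
    simp only [subd, Set.indicator_apply, Finset.mem_coe]
  simp only [hsubd]
  exact sum_indicator_le_self (fun i hi j hj hij => Finset.disjoint_coe.2 (huv hi hj hij)) zero_le

theorem sum_subs_le {ι : Type*} {S : Finset ι} {u v : ι → ℕ}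
    (huv : (S : Set ι).PairwiseDisjoint fun i => Finset.Icc (u i) (v i)) (s : ℕ → ℕ) :
    ∑ i ∈ S, subs (u i) (v i) s ≤ s :=
  sum_subd_le huv s

theorem wisp_sum_lower_bound_general {ι : Type*} {T : ℕ} {d p h s ahi bhi : ℕ → ℕ}
    {S : Finset ι} {δ σ : ι → ℕ → ℕ} (hδ : ∑ i ∈ S, δ i ≤ d) (hσ : ∑ i ∈ S, σ i ≤ s) {w : ι → ℕ}
    (hw : ∀ i ∈ S, ∀ X' I' : ℕ → ℕ,
      Feasible T (δ i) ahi bhi X' I' → w i ≤ planCost T p h (σ i) X' I')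
    {X I : ℕ → ℕ} (hXI : Feasible T d ahi bhi X I) :
    ∑ i ∈ S, w i ≤ planCost T p h s X I := by
  induction S using Finset.cons_induction generalizing d s X I with
  | empty => exact Nat.zero_le _
  | cons a S ha ih =>
    rw [Finset.sum_cons] at hδ hσ ⊢
    obtain ⟨d₂, rfl⟩ := exists_add_of_le ((le_add_of_nonneg_right zero_le).trans hδ)
    obtain ⟨X₁, I₁, X₂, I₂, hXI₁, hXI₂, hsplit⟩ := hXI.exists_split
    have hfirst : w a ≤ planCost T p h (σ a) X₁ I₁ :=
      hw a (Finset.mem_cons_self a S) X₁ I₁ hXI₁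
    have hrest : ∑ i ∈ S, w i ≤ planCost T p h (∑ i ∈ S, σ i) X₂ I₂ :=
      ih (le_of_add_le_add_left hδ) le_rfl
        (fun i hi => hw i (Finset.mem_cons_of_mem hi)) hXI₂
    exact (add_le_add hfirst hrest).trans (planCost_add_planCost_le hσ
      (fun t ht => (hsplit t ht).1.le) fun t ht => (hsplit t ht).2.le)

/-- For any set `S` of pairwise disjoint sub-problems `(L_{u,v})`, the sum of lower
bounds `w i` on the optimal costs of the sub-problems is a lower bound on the
(optimal) cost of the full problem `(L)`. -/
theorem wisp_sum_lower_bound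
    (T : ℕ) (d p h s ahi bhi : ℕ → ℕ)
    (S : Finset (ℕ × ℕ))
    (hS : ∀ i ∈ S, 1 ≤ i.1 ∧ i.1 < i.2 ∧ i.2 ≤ T)
    (hdisj : ∀ i ∈ S, ∀ j ∈ S, i ≠ j →
      Finset.Icc i.1 i.2 ∩ Finset.Icc j.1 j.2 = ∅)
    (w : ℕ × ℕ → ℕ)
    (hw : ∀ i ∈ S, ∀ X' I' : ℕ → ℕ,
      Feasible T (subd i.1 i.2 d) ahi bhi X' I' →
      w i ≤ planCost T p h (subs i.1 i.2 s) X' I')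
    (X I : ℕ → ℕ) (hXI : Feasible T d ahi bhi X I) :
    ∑ i ∈ S, w i ≤ planCost T p h s X I := by
  have hIcc : (S : Set (ℕ × ℕ)).PairwiseDisjoint fun i => Finset.Icc i.1 i.2 :=
    fun i hi j hj hij => Finset.disjoint_iff_inter_eq_empty.2 (hdisj i hi j hj hij)
  exact wisp_sum_lower_bound_general (sum_subd_le hIcc d) (sum_subs_le hIcc s) hw hXI
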